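/- Let T : M₀ → M₀ be a monotone distributional transform on the set of all probability distributions on ℝ. Then T commutes with the set 𝒰 of all utility transforms (i.e., 𝒰 ∘ T = T ∘ 𝒰 as sets of maps) if and only if T = T_d ∘ T^u for some d ∈ F̂_D and some strictly increasing, continuous, surjective u : ℝ → ℝ. -/

import Mathlib

/-!
**If.** For increasing continuous `v`, the set `{v ≤ x}` is empty, all of `ℝ`, or a half-line
`(-∞, a]`, and continuity of `v` turns the right limit at `x` into the right limit at `a`. So every
`T_d` commutes with every `T^v` (`utilityT_distortT`). When `T = T_d ∘ T^u` with `u` an increasing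
bijection, conjugating by `u` therefore exchanges `T^v ∘ T` and `T ∘ T^w`.

**Only if.** Constant utilities force `T` to send point masses to point masses,
`T δ_x = δ_{h x}`, with `h` surjective and increasing; testing with a utility that fixes `a` and
moves `b > a` upwards gives strictness (`exists_pointMass_map`). Put `S = T ∘ T^{h⁻¹}`. It fixes
point masses, so it commutes with each `T^v` individually. Let `d p` be the value at `0` of `S B_p`,
where `B_p` has mass `p` at `0` and mass `1 - p` at `1`. For `x < y`, a ramp utility from `x` to `y`
sends `F` to a law between `B_{F y}` and `B_{F x}`, so `d (F x) ≤ S F x ≤ d (F y)`.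
Right-continuity of `S F` then gives `S = T_d` (`exists_distortion`), and `T = S ∘ T^h`.
-/

open MeasureTheory Filter Topology Set

noncomputable section

/-- The set of cdfs of compactly supported probability distributions on ℝ:
increasing, right-continuous, equal to `0` for all sufficiently small `x` and
equal to `1` for all sufficiently large `x`. -/
def mSet : Set (ℝ → ℝ) :=
  {F | Monotone F ∧ (∀ x, ContinuousWithinAt F (Set.Ici x) x) ∧
    (∃ a, ∀ x ≤ a, F x = 0) ∧ (∃ b, ∀ x, b ≤ x → F x = 1)}

/-- The set of cdfs of all probability distributions on ℝ: increasing,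
right-continuous, with limit `0` at `-∞` and limit `1` at `+∞`. -/
def m0Set : Set (ℝ → ℝ) :=
  {F | Monotone F ∧ (∀ x, ContinuousWithinAt F (Set.Ici x) x) ∧
    Tendsto F atBot (𝓝 0) ∧ Tendsto F atTop (𝓝 1)}

/-- A utility function: increasing (non-strict) and continuous. -/
def IsUF (u : ℝ → ℝ) : Prop := Monotone u ∧ Continuous u

/-- An increasing and left-continuous function on ℝ. -/
def IsLeftCtsIncr (u : ℝ → ℝ) : Prop :=
  Monotone u ∧ ∀ x, ContinuousWithinAt u (Set.Iic x) x

/-- A distortion function: an increasing function `d : [0,1] → [0,1]` with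
`d 0 = 0` and `d 1 = 1` (values outside `[0,1]` are irrelevant). -/
def IsDF (d : ℝ → ℝ) : Prop :=
  MonotoneOn d (Set.Icc 0 1) ∧ d 0 = 0 ∧ d 1 = 1

/-- Right-continuity of a distortion function on `[0,1)`. -/
def DFRightCts (d : ℝ → ℝ) : Prop :=
  ∀ x ∈ Set.Ico (0:ℝ) 1, ContinuousWithinAt d (Set.Ioi x) x

/-- A distortion function with moreover `d(0+) = 0` and `d(1-) = 1`. -/
def IsDFhat (d : ℝ → ℝ) : Prop :=
  IsDF d ∧ Tendsto d (𝓝[>] (0:ℝ)) (𝓝 0) ∧ Tendsto d (𝓝[<] (1:ℝ)) (𝓝 1)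

/-- The probability distortion generated by `d`:  `T_d F x = (d ∘ F)(x+)`,
the right limit of `d ∘ F` at `x`. -/
noncomputable def distortT (d F : ℝ → ℝ) : ℝ → ℝ :=
  fun x => Function.rightLim (d ∘ F) x

/-- The utility transform `T^u`: it maps a cdf `F` to the cdf of the
pushforward under `u` of the probability measure with cdf `F`. -/
noncomputable def utilityT (u F : ℝ → ℝ) : ℝ → ℝ := by
  classical
  exact
    if h : Monotone F ∧ ∀ x, ContinuousWithinAt F (Set.Ici x) x then
      fun x => ((StieltjesFunction.measure ⟨F, h.1, h.2⟩).map u (Set.Iic x)).toReal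
    else F

/-- Left quantile `F_L^{-1}(p) = inf {x | F x ≥ p}`. -/
noncomputable def leftQ (F : ℝ → ℝ) (p : ℝ) : ℝ := sInf {x | p ≤ F x}

/-- Right quantile `F_R^{-1}(p) = inf {x | F x > p}`. -/
noncomputable def rightQ (F : ℝ → ℝ) (p : ℝ) : ℝ := sInf {x | p < F x}

open ProbabilityTheory

/-! ### Distribution functions and utility transforms -/

lemma cdf_mem_m0Set (μ : Measure ℝ) : ⇑(cdf μ) ∈ m0Set :=
  ⟨monotone_cdf μ, (cdf μ).right_continuous, tendsto_cdf_atBot μ, tendsto_cdf_atTop μ⟩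

lemma exists_measure_of_mem_m0Set {F : ℝ → ℝ} (hF : F ∈ m0Set) :
    ∃ μ : Measure ℝ, IsProbabilityMeasure μ ∧ F = cdf μ := by
  obtain ⟨h1, h2, h3, h4⟩ := hF
  let f : StieltjesFunction ℝ := ⟨F, h1, h2⟩
  refine ⟨f.measure, ⟨?_⟩, ?_⟩
  · rw [f.measure_univ (l := 0) (u := 1) h3 h4]; simp
  · rw [cdf_measure_stieltjesFunction f h3 h4]

lemma utilityT_cdf (μ : Measure ℝ) [IsProbabilityMeasure μ] {u : ℝ → ℝ} (hu : Measurable u) :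
    utilityT u (cdf μ) = cdf (μ.map u) := by
  have := Measure.isProbabilityMeasure_map (μ := μ) hu.aemeasurable
  have h : Monotone (cdf μ) ∧ ∀ x, ContinuousWithinAt (cdf μ) (Set.Ici x) x :=
    ⟨monotone_cdf μ, (cdf μ).right_continuous⟩
  ext x
  rw [cdf_eq_real, utilityT, dif_pos h, measureReal_def]
  congr 3
  exact measure_cdf μ

lemma m0Set_nonneg {F : ℝ → ℝ} (hF : F ∈ m0Set) (x : ℝ) : 0 ≤ F x := by
  obtain ⟨μ, _, rfl⟩ := exists_measure_of_mem_m0Set hF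
  exact cdf_nonneg μ x

lemma m0Set_le_one {F : ℝ → ℝ} (hF : F ∈ m0Set) (x : ℝ) : F x ≤ 1 := by
  obtain ⟨μ, _, rfl⟩ := exists_measure_of_mem_m0Set hF
  exact cdf_le_one μ x

lemma utilityT_mem {F u : ℝ → ℝ} (hF : F ∈ m0Set) (hu : Measurable u) :
    utilityT u F ∈ m0Set := by
  obtain ⟨μ, _, rfl⟩ := exists_measure_of_mem_m0Set hF
  rw [utilityT_cdf μ hu]
  exact cdf_mem_m0Set _

lemma utilityT_comp {F u v : ℝ → ℝ} (hF : F ∈ m0Set) (hu : Measurable u) (hv : Measurable v) :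
    utilityT u (utilityT v F) = utilityT (u ∘ v) F := by
  obtain ⟨μ, _, rfl⟩ := exists_measure_of_mem_m0Set hF
  have := Measure.isProbabilityMeasure_map (μ := μ) hv.aemeasurable
  rw [utilityT_cdf μ hv, utilityT_cdf _ hu, utilityT_cdf _ (hu.comp hv), Measure.map_map hu hv]

lemma utilityT_id {F : ℝ → ℝ} (hF : F ∈ m0Set) : utilityT id F = F := by
  obtain ⟨μ, _, rfl⟩ := exists_measure_of_mem_m0Set hF
  rw [utilityT_cdf μ measurable_id, Measure.map_id]

lemma utilityT_cdf_apply (μ : Measure ℝ) [IsProbabilityMeasure μ] {u : ℝ → ℝ} (hu : Measurable u)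
    (x : ℝ) : utilityT u (cdf μ) x = μ.real (u ⁻¹' Iic x) := by
  have := Measure.isProbabilityMeasure_map (μ := μ) hu.aemeasurable
  rw [utilityT_cdf μ hu, cdf_eq_real, map_measureReal_apply hu measurableSet_Iic]

lemma utilityT_le {F u : ℝ → ℝ} (hF : F ∈ m0Set) (hu : Measurable u) {z b : ℝ}
    (h : ∀ y, u y ≤ z → y ≤ b) : utilityT u F z ≤ F b := by
  obtain ⟨μ, _, rfl⟩ := exists_measure_of_mem_m0Set hF
  rw [utilityT_cdf_apply μ hu, cdf_eq_real]
  exact measureReal_mono (fun y hy => h y hy)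

lemma le_utilityT {F u : ℝ → ℝ} (hF : F ∈ m0Set) (hu : Measurable u) {z a : ℝ}
    (h : ∀ y ≤ a, u y ≤ z) : F a ≤ utilityT u F z := by
  obtain ⟨μ, _, rfl⟩ := exists_measure_of_mem_m0Set hF
  rw [utilityT_cdf_apply μ hu, cdf_eq_real]
  exact measureReal_mono (fun y hy => h y hy)

lemma utilityT_eq_zero {F u : ℝ → ℝ} (hF : F ∈ m0Set) (hu : Measurable u) {z : ℝ}
    (h : ∀ y, z < u y) : utilityT u F z = 0 := by
  obtain ⟨μ, _, rfl⟩ := exists_measure_of_mem_m0Set hF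
  have : u ⁻¹' Iic z = ∅ := by
    ext y; simpa using h y
  rw [utilityT_cdf_apply μ hu, this, measureReal_empty]

lemma utilityT_eq_one {F u : ℝ → ℝ} (hF : F ∈ m0Set) (hu : Measurable u) {z : ℝ}
    (h : ∀ y, u y ≤ z) : utilityT u F z = 1 := by
  obtain ⟨μ, _, rfl⟩ := exists_measure_of_mem_m0Set hF
  have : u ⁻¹' Iic z = univ := by
    ext y; simpa using h y
  rw [utilityT_cdf_apply μ hu, this, probReal_univ]

/-! ### Point masses -/

/-- The cdf of the point mass at `c`. -/
def pointMass (c : ℝ) : ℝ → ℝ := cdf (Measure.dirac c)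

lemma pointMass_mem (c : ℝ) : pointMass c ∈ m0Set := cdf_mem_m0Set _

lemma pointMass_of_le {c x : ℝ} (h : c ≤ x) : pointMass c x = 1 := by
  simp [pointMass, cdf_eq_real, measureReal_def, h]

lemma pointMass_of_lt {c x : ℝ} (h : x < c) : pointMass c x = 0 := by
  simp [pointMass, cdf_eq_real, measureReal_def, h]

lemma pointMass_le_iff {a b : ℝ} : (∀ x, pointMass b x ≤ pointMass a x) ↔ a ≤ b := by
  constructor
  · intro h
    by_contra! hab
    have := h b
    rw [pointMass_of_le le_rfl, pointMass_of_lt hab] at this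
    linarith
  · intro h x
    rcases le_or_gt a x with hx | hx
    · rw [pointMass_of_le hx]; exact m0Set_le_one (pointMass_mem b) x
    · rw [pointMass_of_lt (hx.trans_le h)]; exact m0Set_nonneg (pointMass_mem a) x

lemma pointMass_injective : Function.Injective pointMass := fun a b h =>
  le_antisymm (pointMass_le_iff.1 fun x => by rw [h]) (pointMass_le_iff.1 fun x => by rw [h])

lemma utilityT_pointMass {u : ℝ → ℝ} (hu : Measurable u) (c : ℝ) :
    utilityT u (pointMass c) = pointMass (u c) := by
  rw [pointMass, utilityT_cdf _ hu, Measure.map_dirac' hu, pointMass]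

lemma utilityT_const {F : ℝ → ℝ} (hF : F ∈ m0Set) (c : ℝ) :
    utilityT (fun _ => c) F = pointMass c := by
  obtain ⟨μ, _, rfl⟩ := exists_measure_of_mem_m0Set hF
  rw [utilityT_cdf _ measurable_const, Measure.map_const, measure_univ, one_smul, pointMass]

lemma isUF_const (c : ℝ) : IsUF fun _ => c := ⟨monotone_const, continuous_const⟩

/-! ### Distortions commute with utility transforms -/

lemma monotone_distort {d F : ℝ → ℝ} (hd : IsDF d) (hF : F ∈ m0Set) : Monotone (d ∘ F) :=
  fun _ _ h => hd.1 ⟨m0Set_nonneg hF _, m0Set_le_one hF _⟩ ⟨m0Set_nonneg hF _, m0Set_le_one hF _⟩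
    (hF.1 h)

lemma le_rightLim_of_forall {f : ℝ → ℝ} (hf : Monotone f) {x c : ℝ} (h : ∀ z, x < z → c ≤ f z) :
    c ≤ Function.rightLim f x :=
  ge_of_tendsto (hf.tendsto_rightLim x) (eventually_nhdsWithin_of_forall h)

lemma utilityT_distortT {d F v : ℝ → ℝ} (hd : IsDF d) (hF : F ∈ m0Set)
    (hdF : distortT d F ∈ m0Set) (hv : IsUF v) :
    utilityT v (distortT d F) = distortT d (utilityT v F) := by
  have hm := hv.2.measurable
  have hG := utilityT_mem hF hm
  have hdG := monotone_distort hd hG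
  have hdF' := monotone_distort hd hF
  have mem : ∀ {H : ℝ → ℝ}, H ∈ m0Set → ∀ x, H x ∈ Icc (0 : ℝ) 1 := fun hH x =>
    ⟨m0Set_nonneg hH x, m0Set_le_one hH x⟩
  ext x
  -- A point `b` with `x < v b` bounds the right limit at `x` by `d (F b)`.
  have upper : ∀ b, x < v b → distortT d (utilityT v F) x ≤ d (F b) := by
    intro b hb
    obtain ⟨z, hxz, hzb⟩ := exists_between hb
    refine (hdG.rightLim_le hxz).trans (hd.1 (mem hG z) (mem hF b) ?_)
    refine utilityT_le hF hm fun y hy => ?_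
    by_contra! hby
    linarith [hv.1 hby.le]
  by_cases h1 : ∀ y, v y ≤ x
  · rw [utilityT_eq_one hdF hm h1]
    refine le_antisymm (le_rightLim_of_forall hdG fun z hz => ?_) ?_
    · simp [utilityT_eq_one hF hm fun y => (h1 y).trans hz.le, hd.2.2]
    · refine (hdG.rightLim_le (lt_add_one x)).trans ?_
      rw [← hd.2.2]
      exact hd.1 (mem hG _) ⟨zero_le_one, le_rfl⟩ (mem hG _).2
  by_cases h0 : ∀ y, x < v y
  · rw [utilityT_eq_zero hdF hm h0]
    refine le_antisymm (le_rightLim_of_forall hdG fun z hz => ?_) ?_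
    · rw [← hd.2.1]
      exact hd.1 ⟨le_rfl, zero_le_one⟩ (mem hG _) (mem hG _).1
    · refine ge_of_tendsto hdF.2.2.1 (Eventually.of_forall fun a => ?_)
      exact (upper a (h0 a)).trans (hdF'.le_rightLim le_rfl)
  -- The remaining case: `{v ≤ x}` is the half-line ending at its supremum `a`.
  push Not at h0 h1
  obtain ⟨p, hp⟩ := h0
  obtain ⟨q, hq⟩ := h1
  have hbdd : BddAbove {y | v y ≤ x} := ⟨q, fun y hy => by
    by_contra! hqy
    have := hv.1 hqy.le
    have hy' : v y ≤ x := hy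
    linarith⟩
  have hcl : IsClosed {y | v y ≤ x} := isClosed_le hv.2 continuous_const
  obtain ⟨a, ha⟩ : ∃ a, a = sSup {y | v y ≤ x} := ⟨_, rfl⟩
  have hva : v a ≤ x := by
    have := hcl.csSup_mem ⟨p, hp⟩ hbdd
    rwa [← ha] at this
  have hle : ∀ y, v y ≤ x → y ≤ a := fun y hy => ha ▸ le_csSup hbdd hy
  have hlt : ∀ y, a < y → x < v y := fun y hy => by
    by_contra! h
    exact (hle y h).not_gt hy
  have hL : utilityT v (distortT d F) x = distortT d F a :=
    le_antisymm (utilityT_le hdF hm hle) (le_utilityT hdF hm fun y hy => (hv.1 hy).trans hva)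
  rw [hL]
  refine le_antisymm (le_rightLim_of_forall hdG fun z hz => ?_)
    (le_rightLim_of_forall hdF' fun b hb => upper b (hlt b hb))
  have hev : ∀ᶠ b in 𝓝[>] a, v b < z :=
    nhdsWithin_le_nhds (hv.2.continuousAt.eventually_lt continuousAt_const (hva.trans_lt hz))
  obtain ⟨b, hbz, hab⟩ := (hev.and self_mem_nhdsWithin).exists
  refine (hdF'.rightLim_le hab).trans (hd.1 (mem hF b) (mem hG z) ?_)
  exact le_utilityT hF hm fun y hy => (hv.1 hy).trans hbz.le

/-! ### Transforms commuting with each utility transform -/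

/-- The cdf of the two-point law with mass `p` at `0` and mass `1 - p` at `1`. -/
def twoPoint (p : ℝ) : ℝ → ℝ := fun x => p * pointMass 0 x + (1 - p) * pointMass 1 x

lemma twoPoint_of_neg (p : ℝ) {x : ℝ} (h : x < 0) : twoPoint p x = 0 := by
  simp [twoPoint, pointMass_of_lt h, pointMass_of_lt (h.trans zero_lt_one)]

lemma twoPoint_of_mid (p : ℝ) {x : ℝ} (h : 0 ≤ x) (h' : x < 1) : twoPoint p x = p := by
  simp [twoPoint, pointMass_of_le h, pointMass_of_lt h']

lemma twoPoint_of_one_le (p : ℝ) {x : ℝ} (h : 1 ≤ x) : twoPoint p x = 1 := by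
  simp [twoPoint, pointMass_of_le h, pointMass_of_le (zero_le_one.trans h)]

lemma twoPoint_mem {p : ℝ} (hp : p ∈ Icc (0 : ℝ) 1) : twoPoint p ∈ m0Set := by
  have h0 := pointMass_mem 0
  have h1 := pointMass_mem 1
  refine ⟨fun x y h => ?_, fun x => ?_, ?_, ?_⟩
  · have := mul_le_mul_of_nonneg_left (h0.1 h) hp.1
    have := mul_le_mul_of_nonneg_left (h1.1 h) (sub_nonneg.2 hp.2)
    simp only [twoPoint]
    linarith
  · exact ((h0.2.1 x).const_mul p).add ((h1.2.1 x).const_mul (1 - p))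
  · simpa using! (h0.2.2.1.const_mul p).add (h1.2.2.1.const_mul (1 - p))
  · simpa using! (h0.2.2.2.const_mul p).add (h1.2.2.2.const_mul (1 - p))

/-- The continuous utility equal to `0` up to `x`, to `1` from `y` on, and linear in between. -/
def ramp (x y : ℝ) : ℝ → ℝ := fun t => max 0 (min 1 ((t - x) / (y - x)))

lemma ramp_isUF {x y : ℝ} (h : x < y) : IsUF (ramp x y) := by
  constructor
  · intro s t hst
    have : (s - x) / (y - x) ≤ (t - x) / (y - x) :=
      div_le_div_of_nonneg_right (by linarith) (by linarith)
    exact max_le_max le_rfl (min_le_min le_rfl this)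
  · unfold ramp; fun_prop

lemma ramp_nonneg (x y t : ℝ) : 0 ≤ ramp x y t := le_max_left _ _

lemma ramp_le_one (x y t : ℝ) : ramp x y t ≤ 1 := max_le zero_le_one (min_le_left _ _)

lemma ramp_nonpos_iff {x y : ℝ} (h : x < y) (t : ℝ) : ramp x y t ≤ 0 ↔ t ≤ x := by
  have hxy : 0 < y - x := sub_pos.2 h
  simp only [ramp, max_le_iff, le_refl, true_and, min_le_iff]
  rw [div_le_iff₀ hxy]
  constructor
  · rintro (h | h) <;> linarith
  · intro h; right; linarith

lemma lt_of_ramp_lt_one {x y : ℝ} (h : x < y) {t : ℝ} (ht : ramp x y t < 1) : t < y := by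
  have hxy : 0 < y - x := sub_pos.2 h
  have := (max_lt_iff.1 ht).2
  rcases min_lt_iff.1 this with h | h
  · linarith
  · rw [div_lt_one hxy] at h; linarith

/-- A monotone transform that fixes point masses and commutes with each utility transform is a
probability distortion. -/
lemma exists_distortion (S : (ℝ → ℝ) → ℝ → ℝ) (hS : ∀ F ∈ m0Set, S F ∈ m0Set)
    (hmono : ∀ F ∈ m0Set, ∀ G ∈ m0Set, (∀ x, G x ≤ F x) → ∀ x, S G x ≤ S F x)
    (hpt : ∀ c, S (pointMass c) = pointMass c)
    (hcomm : ∀ u, IsUF u → ∀ F ∈ m0Set, utilityT u (S F) = S (utilityT u F)) :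
    ∃ d, IsDFhat d ∧ ∀ F ∈ m0Set, S F = distortT d F := by
  have mem : ∀ {H : ℝ → ℝ}, H ∈ m0Set → ∀ x, H x ∈ Icc (0 : ℝ) 1 := fun hH x =>
    ⟨m0Set_nonneg hH x, m0Set_le_one hH x⟩
  obtain ⟨d, hd⟩ : ∃ d : ℝ → ℝ, ∀ p, d p = S (twoPoint p) 0 := ⟨_, fun _ => rfl⟩
  have hDF : IsDF d := by
    refine ⟨fun p hp q hq hpq => ?_, ?_, ?_⟩
    · rw [hd, hd]
      refine hmono _ (twoPoint_mem hq) _ (twoPoint_mem hp) (fun x => ?_) 0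
      rcases lt_or_ge x 0 with h | h
      · rw [twoPoint_of_neg p h, twoPoint_of_neg q h]
      rcases lt_or_ge x 1 with h' | h'
      · rwa [twoPoint_of_mid p h h', twoPoint_of_mid q h h']
      · rw [twoPoint_of_one_le p h', twoPoint_of_one_le q h']
    · have : twoPoint 0 = pointMass 1 := by ext x; simp [twoPoint]
      rw [hd, this, hpt, pointMass_of_lt zero_lt_one]
    · have : twoPoint 1 = pointMass 0 := by ext x; simp [twoPoint]
      rw [hd, this, hpt, pointMass_of_le le_rfl]
  have sandwich : ∀ F ∈ m0Set, ∀ x y, x < y → d (F x) ≤ S F x ∧ S F x ≤ d (F y) := by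
    intro F hF x y hxy
    have hu := ramp_isUF hxy
    have hm := hu.2.measurable
    have hG := utilityT_mem hF hm
    have key : S F x = S (utilityT (ramp x y) F) 0 := by
      rw [← hcomm _ hu F hF]
      exact le_antisymm (le_utilityT (hS F hF) hm fun t ht => (ramp_nonpos_iff hxy t).2 ht)
        (utilityT_le (hS F hF) hm fun t ht => (ramp_nonpos_iff hxy t).1 ht)
    rw [key, hd, hd]
    constructor
    · refine hmono _ hG _ (twoPoint_mem (mem hF x)) (fun z => ?_) 0
      rcases lt_or_ge z 0 with h | h
      · rw [twoPoint_of_neg _ h]; exact m0Set_nonneg hG z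
      rcases lt_or_ge z 1 with h' | h'
      · rw [twoPoint_of_mid _ h h']
        exact le_utilityT hF hm fun t ht => ((ramp_nonpos_iff hxy t).2 ht).trans h
      · rw [utilityT_eq_one hF hm fun t => (ramp_le_one x y t).trans h']
        exact (mem (twoPoint_mem (mem hF x)) z).2
    · refine hmono _ (twoPoint_mem (mem hF y)) _ hG (fun z => ?_) 0
      rcases lt_or_ge z 0 with h | h
      · rw [utilityT_eq_zero hF hm fun t => h.trans_le (ramp_nonneg x y t)]
        exact (mem (twoPoint_mem (mem hF y)) z).1
      rcases lt_or_ge z 1 with h' | h'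
      · rw [twoPoint_of_mid _ h h']
        exact utilityT_le hF hm fun t ht => (lt_of_ramp_lt_one hxy (ht.trans_lt h')).le
      · rw [twoPoint_of_one_le _ h']; exact m0Set_le_one hG z
  -- The logistic cdf takes every value in `(0, 1)`, so it detects the limits of `d` at `0` and `1`.
  have hsig : Real.sigmoid ∈ m0Set :=
    ⟨Real.sigmoid_monotone, fun x => continuous_sigmoid.continuousWithinAt,
      Real.tendsto_sigmoid_atBot, Real.tendsto_sigmoid_atTop⟩
  refine ⟨d, ⟨hDF, ?_, ?_⟩, fun F hF => ?_⟩
  · rw [tendsto_order]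
    refine ⟨fun a ha => ?_, fun a ha => ?_⟩
    · filter_upwards [Ioo_mem_nhdsGT (zero_lt_one' ℝ)] with p hp
      refine ha.trans_le ?_
      rw [← hDF.2.1]
      exact hDF.1 ⟨le_rfl, zero_le_one⟩ ⟨hp.1.le, hp.2.le⟩ hp.1.le
    · obtain ⟨x, hx⟩ := ((hS _ hsig).2.2.1.eventually_lt_const ha).exists
      filter_upwards [Ioo_mem_nhdsGT (Real.sigmoid_pos x)] with p hp
      refine lt_of_le_of_lt ?_ hx
      refine le_trans (hDF.1 ⟨hp.1.le, hp.2.le.trans (Real.sigmoid_le_one x)⟩ (mem hsig x) hp.2.le)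
        (sandwich _ hsig x (x + 1) (lt_add_one x)).1
  · rw [tendsto_order]
    refine ⟨fun a ha => ?_, fun a ha => ?_⟩
    · obtain ⟨x, hx⟩ := ((hS _ hsig).2.2.2.eventually_const_lt ha).exists
      filter_upwards [Ioo_mem_nhdsLT (Real.sigmoid_lt_one (x + 1))] with p hp
      refine lt_of_lt_of_le hx ?_
      refine le_trans (sandwich _ hsig x (x + 1) (lt_add_one x)).2
        (hDF.1 (mem hsig _) ⟨(Real.sigmoid_nonneg _).trans hp.1.le, hp.2.le⟩ hp.1.le)
    · filter_upwards [Ioo_mem_nhdsLT (zero_lt_one' ℝ)] with p hp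
      refine lt_of_le_of_lt ?_ ha
      rw [← hDF.2.2]
      exact hDF.1 ⟨hp.1.le, hp.2.le⟩ ⟨zero_le_one, le_rfl⟩ hp.2.le
  · have hdF := monotone_distort hDF hF
    ext x
    refine le_antisymm (le_rightLim_of_forall hdF fun y hy => (sandwich F hF x y hy).2) ?_
    have hrc : Tendsto (S F) (𝓝[>] x) (𝓝 (S F x)) :=
      ((hS F hF).2.1 x).mono Ioi_subset_Ici_self
    refine ge_of_tendsto hrc (eventually_nhdsWithin_of_forall fun y hy => ?_)
    exact (hdF.rightLim_le hy).trans (sandwich F hF y (y + 1) (lt_add_one y)).1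

/-! ### The action on point masses -/

lemma exists_pointMass_map (T : (ℝ → ℝ) → ℝ → ℝ)
    (hmono : ∀ F ∈ m0Set, ∀ G ∈ m0Set, (∀ x, G x ≤ F x) → ∀ x, T G x ≤ T F x)
    (h1 : ∀ u : ℝ → ℝ, IsUF u → ∃ u' : ℝ → ℝ, IsUF u' ∧
        ∀ F ∈ m0Set, utilityT u' (T F) = T (utilityT u F))
    (h2 : ∀ u' : ℝ → ℝ, IsUF u' → ∃ u : ℝ → ℝ, IsUF u ∧
        ∀ F ∈ m0Set, utilityT u' (T F) = T (utilityT u F))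
    (hT : ∀ F ∈ m0Set, T F ∈ m0Set) :
    ∃ h : ℝ → ℝ, StrictMono h ∧ Function.Surjective h ∧
      ∀ x, T (pointMass x) = pointMass (h x) := by
  have hsurj : ∀ c, ∃ b, T (pointMass b) = pointMass c := by
    intro c
    obtain ⟨u, hu, h⟩ := h2 _ (isUF_const c)
    have := h _ (pointMass_mem 0)
    rw [utilityT_const (hT _ (pointMass_mem 0)), utilityT_pointMass hu.2.measurable] at this
    exact ⟨u 0, this.symm⟩
  have hex : ∀ x, ∃ c, T (pointMass x) = pointMass c := by
    intro x
    obtain ⟨b, hb⟩ := hsurj 0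
    obtain ⟨u', hu', h⟩ := h1 _ (isUF_const x)
    have := h _ (pointMass_mem b)
    rw [utilityT_const (pointMass_mem b), hb, utilityT_pointMass hu'.2.measurable] at this
    exact ⟨_, this.symm⟩
  choose h hh using hex
  have hhmono : Monotone h := by
    intro a b hab
    rw [← pointMass_le_iff, ← hh, ← hh]
    exact hmono _ (pointMass_mem a) _ (pointMass_mem b) (pointMass_le_iff.2 hab)
  have hhsurj : Function.Surjective h := fun c => by
    obtain ⟨b, hb⟩ := hsurj c
    exact ⟨b, pointMass_injective (by rw [← hh, hb])⟩
  refine ⟨h, hhmono.strictMono_of_injective ?_, hhsurj, hh⟩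
  -- If `h a = h b` with `a < b`, dilations about `a` show that `h` is constant on `[a, ∞)`.
  have hne : ∀ a b, a < b → h a ≠ h b := by
    intro a b hab heq
    obtain ⟨t, ht⟩ := hhsurj (h a + 1)
    have hat : a ≤ t := by
      by_contra! hlt
      linarith [hhmono hlt.le]
    have hba : 0 < b - a := sub_pos.2 hab
    let u : ℝ → ℝ := fun s => a + (t - a) / (b - a) * (s - a)
    have hu : IsUF u := by
      refine ⟨fun r s hrs => ?_, by unfold u; fun_prop⟩
      have : 0 ≤ (t - a) / (b - a) := div_nonneg (by linarith) hba.le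
      have := mul_le_mul_of_nonneg_left (sub_le_sub_right hrs a) this
      simp only [u]; linarith
    have hua : u a = a := by simp [u]
    have hub : u b = t := by simp only [u]; rw [div_mul_cancel₀ _ hba.ne']; ring
    obtain ⟨u', hu', hc⟩ := h1 u hu
    have hcx : ∀ x, u' (h x) = h (u x) := fun x => by
      have := hc _ (pointMass_mem x)
      rw [utilityT_pointMass hu.2.measurable, hh, hh, utilityT_pointMass hu'.2.measurable] at this
      exact pointMass_injective this
    have ha := hcx a
    have hb := hcx b
    rw [hua] at ha
    rw [hub, ← heq, ha, ht] at hb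
    linarith
  intro a b hab
  rcases lt_trichotomy a b with hlt | hlt | hlt
  · exact (hne a b hlt hab).elim
  · exact hlt
  · exact (hne b a hlt hab.symm).elim

/-- A monotone map `T : M₀ → M₀` commutes with the set `𝒰` of all utility
transforms (`𝒰 ∘ T = T ∘ 𝒰` as sets of maps `M₀ → M₀`) if and only if
`T = T_d ∘ T^u` for some `d ∈ F̂_D` and some strictly increasing, continuous,
surjective `u : ℝ → ℝ`. -/
theorem stmt12 (T : (ℝ → ℝ) → ℝ → ℝ) (hT : ∀ F ∈ m0Set, T F ∈ m0Set)
    (hmono : ∀ F ∈ m0Set, ∀ G ∈ m0Set, (∀ x, G x ≤ F x) → ∀ x, T G x ≤ T F x) :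
    ((∀ u : ℝ → ℝ, IsUF u → ∃ u' : ℝ → ℝ, IsUF u' ∧
        ∀ F ∈ m0Set, utilityT u' (T F) = T (utilityT u F)) ∧
      (∀ u' : ℝ → ℝ, IsUF u' → ∃ u : ℝ → ℝ, IsUF u ∧
        ∀ F ∈ m0Set, utilityT u' (T F) = T (utilityT u F))) ↔
      ∃ d u : ℝ → ℝ, IsDFhat d ∧ StrictMono u ∧ Continuous u ∧ Function.Surjective u ∧
        ∀ F ∈ m0Set, T F = distortT d (utilityT u F) := by
  constructor
  · rintro ⟨h1, h2⟩
    obtain ⟨h, hh, hs, hpt⟩ := exists_pointMass_map T hmono h1 h2 hT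
    let e := hh.orderIsoOfSurjective h hs
    have hcont : Continuous h := hh.monotone.continuous_of_surjective hs
    have hg : Measurable e.symm := e.symm.continuous.measurable
    have hge : ∀ x, h (e.symm x) = x := e.apply_symm_apply
    have heg : ∀ x, e.symm (h x) = x := e.symm_apply_apply
    obtain ⟨d, hd, hS⟩ := exists_distortion (fun F => T (utilityT e.symm F))
      (fun F hF => hT _ (utilityT_mem hF hg))
      (fun F hF G hG hFG => hmono _ (utilityT_mem hF hg) _ (utilityT_mem hG hg) fun x => by
        have hiff : ∀ y, e.symm y ≤ x ↔ y ≤ h x := fun y => e.symm_apply_le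
        exact ((utilityT_le hG hg fun y hy => (hiff y).1 hy).trans (hFG _)).trans
          (le_utilityT hF hg fun y hy => (hiff y).2 hy))
      (fun c => by rw [utilityT_pointMass hg, hpt, hge])
      (fun u hu F hF => by
        -- `v` is the conjugate of `u` by `h`; evaluating at point masses identifies the partner
        -- of `v` with `u` itself.
        let v : ℝ → ℝ := e.symm ∘ u ∘ h
        have hv : IsUF v :=
          ⟨e.symm.monotone.comp (hu.1.comp hh.monotone), e.symm.continuous.comp (hu.2.comp hcont)⟩
        obtain ⟨u', hu', hc⟩ := h1 v hv
        have huu : u' = u := by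
          ext x
          have := hc _ (pointMass_mem (e.symm x))
          rw [hpt, utilityT_pointMass hu'.2.measurable, utilityT_pointMass hv.2.measurable, hpt,
            hge] at this
          rw [pointMass_injective this]
          simp only [v, Function.comp_apply, hge]
        subst huu
        rw [hc _ (utilityT_mem hF hg), utilityT_comp hF hv.2.measurable hg,
          utilityT_comp hF hg hu.2.measurable]
        congr 2
        ext x
        simp only [v, Function.comp_apply, hge])
    refine ⟨d, h, hd, hh, hcont, hs, fun F hF => ?_⟩
    rw [← hS _ (utilityT_mem hF hcont.measurable), utilityT_comp hF hg hcont.measurable]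
    have : e.symm ∘ h = id := funext heg
    rw [this, utilityT_id hF]
  · rintro ⟨d, h, hd, hh, hcont, hs, hTd⟩
    let e := hh.orderIsoOfSurjective h hs
    have hg : Measurable e.symm := e.symm.continuous.measurable
    have hge : ∀ x, h (e.symm x) = x := e.apply_symm_apply
    have heg : ∀ x, e.symm (h x) = x := e.symm_apply_apply
    have key : ∀ u u' : ℝ → ℝ, IsUF u → IsUF u' → h ∘ u = u' ∘ h →
        ∀ F ∈ m0Set, utilityT u' (T F) = T (utilityT u F) := by
      intro u u' hu hu' huu F hF
      have hG := utilityT_mem hF hcont.measurable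
      have hdG : distortT d (utilityT h F) ∈ m0Set := hTd F hF ▸ hT F hF
      rw [hTd F hF, hTd _ (utilityT_mem hF hu.2.measurable), utilityT_distortT hd.1 hG hdG hu',
        utilityT_comp hF hu'.2.measurable hcont.measurable,
        utilityT_comp hF hcont.measurable hu.2.measurable, huu]
    constructor
    · intro u hu
      have hu' : IsUF (h ∘ u ∘ e.symm) :=
        ⟨hh.monotone.comp (hu.1.comp e.symm.monotone), hcont.comp (hu.2.comp e.symm.continuous)⟩
      exact ⟨_, hu', key u _ hu hu' (by ext x; simp only [Function.comp_apply, heg])⟩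
    · intro u' hu'
      have hu : IsUF (e.symm ∘ u' ∘ h) :=
        ⟨e.symm.monotone.comp (hu'.1.comp hh.monotone), e.symm.continuous.comp (hu'.2.comp hcont)⟩
      exact ⟨_, hu, key _ u' hu hu' (by ext x; simp only [Function.comp_apply, hge])⟩
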